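/- arXiv:1202.2279 — 4 statements merged into one kernel-verified Lean document; each statement's English description precedes it below -/
import Mathlib

section
/- Assume hypotheses (S). Then for every ε > 0 there exists n_0 such that for every n ≥ n_0 the following holds: if a point of ℤ^p can be written as λ_1e_1 + … + λ_ke_k + u with real numbers λ_1,…,λ_k satisfying |λ_j| ≤ Q_n^{τ_j−ε} for every j ∈ {1,…,k}, and with u orthogonal to the ℝ-span of e_1,…,e_k and ‖u‖ ≤ Q_n^{−1−ε}, then this point is the zero vector. -/
/-!
At an integer point each integer form `L_n^{(t)}` takes an integer value. Along
`λ_1e_1 + … + λ_ke_k` the exponents `τ_j - ε` and `-τ_j + ε_n` add up to `-ε + ε_n`, and on `u` the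
exponents `1 + θ_n` and `-1 - ε` add up to `-ε + θ_n`; so this value is at most
`(k + p) Q_n^{-ε/2} < 1` in absolute value for large `n`, hence it is zero. As the `p` forms are
independent, the point is the origin.
-/

open Filter Topology WithLp
open scoped ENNReal Matrix

theorem eq_zero_of_abs_dotProduct_lt_one {ι K : Type*} [Fintype ι] [Field K] [LinearOrder K]
    [IsStrictOrderedRing K] {L : ι → ι → ℤ} (hL : LinearIndependent K fun t i ↦ (L t i : K))
    {x : ι → K} (hx : ∀ i, ∃ m : ℤ, x i = m)
    (hlt : ∀ t, |(fun i ↦ (L t i : K)) ⬝ᵥ x| < 1) : x = 0 := by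
  classical
  choose m hm using hx
  obtain rfl : x = fun i ↦ (m i : K) := funext hm
  have hcast (t : ι) : (fun i ↦ (L t i : K)) ⬝ᵥ (fun i ↦ (m i : K)) = ((L t ⬝ᵥ m : ℤ) : K) := by
    simp only [dotProduct, Int.cast_sum, Int.cast_mul]
  have hzero (t : ι) : L t ⬝ᵥ m = 0 := by
    rw [← Int.abs_lt_one_iff]
    exact_mod_cast hcast t ▸ hlt t
  have hunit : IsUnit (Matrix.of fun t i ↦ (L t i : K)) :=
    Matrix.linearIndependent_rows_iff_isUnit.1 hL
  refine Matrix.mulVec_injective_of_isUnit hunit (funext fun t ↦ ?_)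
  rw [Matrix.mulVec_zero, Pi.zero_apply, ← Int.cast_zero, ← hzero t]
  exact hcast t

theorem abs_dotProduct_le_card_mul_rpow {ι : Type*} [Fintype ι] {q c : ℝ} (hq : 1 ≤ q)
    {a b : ι → ℝ} {s t : ι → ℝ} (ha : ∀ i, |a i| ≤ q ^ s i) (hb : ∀ i, |b i| ≤ q ^ t i)
    (hst : ∀ i, s i + t i ≤ c) : |a ⬝ᵥ b| ≤ Fintype.card ι * q ^ c := by
  have hq₀ : 0 < q := one_pos.trans_le hq
  have hterm (i : ι) : |a i * b i| ≤ q ^ c :=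
    calc |a i * b i| = |a i| * |b i| := abs_mul _ _
      _ ≤ q ^ s i * q ^ t i := by gcongr; exacts [ha i, hb i]
      _ = q ^ (s i + t i) := (Real.rpow_add hq₀ _ _).symm
      _ ≤ q ^ c := Real.rpow_le_rpow_of_exponent_le hq (hst i)
  calc |a ⬝ᵥ b| ≤ ∑ i, |a i * b i| := Finset.abs_sum_le_sum_abs _ _
    _ ≤ ∑ _ : ι, q ^ c := Finset.sum_le_sum fun i _ ↦ hterm i
    _ = Fintype.card ι * q ^ c := by simp

theorem abs_dotProduct_sum_smul_add_le {ι κ : Type*} [Fintype ι] [Fintype κ] {q c η θ ε : ℝ}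
    (hq : 1 ≤ q) (hη : η - ε ≤ c) (hθ : θ - ε ≤ c) {w : ι → ℝ} {e : κ → ι → ℝ} {τ : κ → ℝ}
    (hw : ∀ i, |w i| ≤ q ^ (1 + θ)) (hwe : ∀ j, |w ⬝ᵥ e j| ≤ q ^ (-τ j + η))
    {lam : κ → ℝ} (hlam : ∀ j, |lam j| ≤ q ^ (τ j - ε))
    {u : ι → ℝ} (hu : ∀ i, |u i| ≤ q ^ (-1 - ε)) :
    |w ⬝ᵥ (∑ j, lam j • e j + u)| ≤ (Fintype.card κ + Fintype.card ι) * q ^ c := by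
  have hsplit : w ⬝ᵥ (∑ j, lam j • e j + u) = (lam ⬝ᵥ fun j ↦ w ⬝ᵥ e j) + w ⬝ᵥ u := by
    rw [dotProduct_add, dotProduct_sum]
    simp only [dotProduct_smul, smul_eq_mul]
    rfl
  have hspan : |lam ⬝ᵥ fun j ↦ w ⬝ᵥ e j| ≤ Fintype.card κ * q ^ c :=
    abs_dotProduct_le_card_mul_rpow hq hlam hwe fun _ ↦ by linarith
  have hrest : |w ⬝ᵥ u| ≤ Fintype.card ι * q ^ c :=
    abs_dotProduct_le_card_mul_rpow hq hw hu fun _ ↦ by linarith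
  rw [hsplit, add_mul]
  exact (abs_add_le _ _).trans (add_le_add hspan hrest)

theorem eventually_mul_rpow_neg_lt_one (C : ℝ) {δ : ℝ} (hδ : 0 < δ) :
    ∀ᶠ x : ℝ in atTop, C * x ^ (-δ) < 1 := by
  have h := (tendsto_rpow_neg_atTop hδ).const_mul C
  rw [mul_zero] at h
  exact h.eventually_lt_const one_pos

theorem stmt15_general {α ι κ : Type*} [Fintype ι] [Fintype κ] {r : ℝ≥0∞} [Fact (1 ≤ r)]
    {F : Filter α} {e : κ → PiLp r fun _ : ι ↦ ℝ} {τs : κ → ℝ} {Q : α → ℝ}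
    (hQ : Tendsto Q F atTop) {l : α → ι → ι → ℤ}
    (hind : ∀ᶠ n in F, LinearIndependent ℝ fun t i ↦ (l n t i : ℝ)) {εs θs : α → ℝ}
    (hεs : Tendsto εs F (𝓝 0)) (hθs : Tendsto θs F (𝓝 0))
    (hL : ∀ᶠ n in F, ∀ t j, |∑ i, (l n t i : ℝ) * e j i| ≤ Q n ^ (-τs j + εs n))
    (hl : ∀ᶠ n in F, ∀ t i, |(l n t i : ℝ)| ≤ Q n ^ (1 + θs n)) {ε : ℝ} (hε : 0 < ε) :
    ∀ᶠ n in F, ∀ (lam : κ → ℝ) (u : PiLp r fun _ : ι ↦ ℝ),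
      (∀ j, |lam j| ≤ Q n ^ (τs j - ε)) →
      ‖u‖ ≤ Q n ^ (-1 - ε) →
      (∀ i, ∃ m : ℤ, (∑ j, lam j • e j + u) i = m) →
      ∑ j, lam j • e j + u = 0 := by
  filter_upwards [hind, hL, hl, hQ.eventually_ge_atTop 1,
    hεs.eventually_lt_const (half_pos hε), hθs.eventually_lt_const (half_pos hε),
    hQ.eventually (eventually_mul_rpow_neg_lt_one (Fintype.card κ + Fintype.card ι) (half_pos hε))]
    with n hind hL hl hq hεn hθn hsmall lam u hlam hu hint
  have hu' (i : ι) : |u i| ≤ Q n ^ (-1 - ε) := (PiLp.norm_apply_le u i).trans hu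
  have hofLp : ofLp (∑ j, lam j • e j + u) = ∑ j, lam j • ofLp (e j) + ofLp u := by
    simp only [ofLp_add, ofLp_sum, ofLp_smul]
  refine (ofLp_eq_zero r).1 (eq_zero_of_abs_dotProduct_lt_one hind hint fun t ↦ ?_)
  rw [hofLp]
  exact (abs_dotProduct_sum_smul_add_le hq (by linarith) (by linarith) (hl t) (hL t) hlam
    hu').trans_lt hsmall

/-- Siegel-type criterion, quantitative part: under hypotheses (S), for every ε > 0 and all
sufficiently large n, the only integer point λ_1e_1+…+λ_ke_k+u with |λ_j| ≤ Q_n^{τ_j-ε} and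
u ⟂ Span(e), ‖u‖ ≤ Q_n^{-1-ε}, is the zero vector. -/
theorem stmt15
    (k p : ℕ) (hk : 1 ≤ k) (hkp : k ≤ p - 1)
    (e : Fin k → EuclideanSpace ℝ (Fin p)) (he : LinearIndependent ℝ e)
    (τs : Fin k → ℝ) (hτpos : ∀ j, 0 < τs j)
    (Q : ℕ → ℕ) (hQmono : StrictMono Q) (hQpos : ∀ n, 0 < Q n)
    (l : ℕ → Fin p → Fin p → ℤ)
    (hind : ∀ n : ℕ, 1 ≤ n →
      LinearIndependent ℝ (fun t : Fin p => fun i : Fin p => (l n t i : ℝ)))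
    (εs θs : ℕ → ℝ)
    (hεs : Filter.Tendsto εs Filter.atTop (nhds 0))
    (hθs : Filter.Tendsto θs Filter.atTop (nhds 0))
    (hL : ∀ n : ℕ, 1 ≤ n → ∀ t : Fin p, ∀ j : Fin k,
      |∑ i, (l n t i : ℝ) * e j i| ≤ (Q n : ℝ) ^ (-τs j + εs n))
    (hl : ∀ n : ℕ, 1 ≤ n → ∀ t i, |(l n t i : ℝ)| ≤ (Q n : ℝ) ^ (1 + θs n))
    :
    ∀ ε : ℝ, 0 < ε → ∃ n0 : ℕ, ∀ n : ℕ, n0 ≤ n →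
      ∀ (lam : Fin k → ℝ) (u : EuclideanSpace ℝ (Fin p)),
        (∀ j, |lam j| ≤ (Q n : ℝ) ^ (τs j - ε)) →
        u ∈ (Submodule.span ℝ (Set.range e))ᗮ →
        ‖u‖ ≤ (Q n : ℝ) ^ (-1 - ε) →
        (∀ i, ∃ m : ℤ, (∑ j, lam j • e j + u) i = (m : ℝ)) →
        ∑ j, lam j • e j + u = 0 := by
  intro ε hε
  exact eventually_atTop.1 <| (stmt15_general
    (tendsto_natCast_atTop_atTop.comp hQmono.tendsto_atTop)
    ((eventually_ge_atTop 1).mono hind) hεs hθs ((eventually_ge_atTop 1).mono hL)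
    ((eventually_ge_atTop 1).mono hl) hε).mono fun n h lam u hlam _ ↦ h lam u hlam
end

section
/- Assume hypotheses (P). Then for all real numbers λ_1,…,λ_k, setting M = λ_1e_1 + … + λ_ke_k, for every n ≥ n_0 and every j ∈ {1,…,k} one has |λ_j| ≤ (1 + 1/k + 1/k²) · Σ_{i=1}^{k} |L_{φ^{i−1}(n)}(M)| / |L_{φ^{i−1}(n)}(e_j)|, where φ^{i−1} denotes the (i−1)-fold iterate of φ. -/
/-! The ratios `|L_{n'}(e_i)| / |L_n(e_i)|` grow by a factor of at least `(k + 1)!` from each `i` to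
the next, so every `2 × 2` minor of the matrix `A = (L_{φ^i(n)}(e_j))` has an antidiagonal product
at most `1 / (k + 1)!` times the diagonal one. Undoing an inversion of a permutation `σ` therefore
multiplies `∏ |A (σ x) x|` by at least `(k + 1)!`, so the identity carries the dominant term of the
Leibniz expansion, and every other term is smaller by that factor. Applied to `det A`, and to the
determinant of `A` with column `j` replaced by `A λ`, this estimates both sides of Cramer's rule
`λ_j det A = det (A with column j replaced by A λ)`. -/

open Equiv Finset Matrix

section Permutations

theorem exists_lt_and_apply_lt_of_ne_one {ι : Type*} [LinearOrder ι] [Finite ι] {σ : Perm ι}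
    (hσ : σ ≠ 1) : ∃ a b, a < b ∧ σ b < σ a := by
  by_contra! no_inversion
  have hmono : Monotone σ := fun a b hab => by
    obtain rfl | hlt := hab.eq_or_lt
    exacts [le_rfl, no_inversion a b hlt]
  exact hσ (DFunLike.coe_injective (hmono.strictMono_of_injective σ.injective).eq_id)

theorem sum_perm_apply {ι M : Type*} [Fintype ι] [DecidableEq ι] [AddCommMonoid M]
    (f : ι → M) (j : ι) :
    ∑ σ : Perm ι, f (σ j) = (Fintype.card ι - 1).factorial • ∑ i, f i := by
  -- A permutation of `ι` amounts to the image of `j` and a permutation of the complement of `j`.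
  let e : Perm ι ≃ Option {i // i ≠ j} × Perm {i // i ≠ j} :=
    (optionSubtypeNe j).symm.permCongr.trans Perm.decomposeOption
  calc ∑ σ : Perm ι, f (σ j)
      = ∑ x : Option {i // i ≠ j} × Perm {i // i ≠ j}, f (optionSubtypeNe j x.1) :=
        Fintype.sum_equiv e _ _ fun σ => congrArg f (by simp only [e, Equiv.trans_apply,
          Perm.decomposeOption_apply, permCongr_apply, symm_symm, optionSubtypeNe_none,
          apply_symm_apply])
    _ = (Fintype.card ι - 1).factorial • ∑ x, f (optionSubtypeNe j x) := by
        simp [Fintype.sum_prod_type, Fintype.card_perm, ← Finset.smul_sum, -Fintype.sum_option]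
    _ = (Fintype.card ι - 1).factorial • ∑ i, f i := by rw [Equiv.sum_comp]

end Permutations

theorem le_mul_of_forall_covBy {α R : Type*} [PartialOrder α] [LocallyFiniteOrder α]
    [Semiring R] [PartialOrder R] [IsOrderedRing R] {f : α → R} {c : R}
    (hf : ∀ i, 0 ≤ f i) (hc₀ : 0 ≤ c) (hc₁ : c ≤ 1) (hcov : ∀ i j, i ⋖ j → f i ≤ c * f j)
    {i j : α} (hij : i < j) : f i ≤ c * f j := by
  have hmono : Monotone f := (monotone_iff_forall_covBy f).2 fun a b hab =>
    (hcov a b hab).trans (mul_le_of_le_one_left (hf b) hc₁)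
  obtain ⟨i', hi', hij'⟩ := exists_covBy_le_of_lt hij
  exact (hcov i i' hi').trans (mul_le_mul_of_nonneg_left (hmono hij') hc₀)

section Iterates

variable {α : Type*} [Preorder α] {φ : α → α} {a x : α}

theorem le_iterate_of_forall_le_apply (hφ : ∀ y, a ≤ y → y ≤ φ y) (hx : a ≤ x) (i : ℕ) :
    a ≤ φ^[i] x :=
  Set.MapsTo.iterate (s := Set.Ici a) (fun y hy => le_trans hy (hφ y hy)) i hx

theorem monotone_iterate_of_forall_le_apply (hφ : ∀ y, a ≤ y → y ≤ φ y) (hx : a ≤ x) :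
    Monotone fun i => φ^[i] x :=
  monotone_nat_of_le_succ fun i => by
    rw [Function.iterate_succ_apply']
    exact hφ _ (le_iterate_of_forall_le_apply hφ hx i)

end Iterates

/-- In every `2 × 2` minor of `A`, the antidiagonal product is, in absolute value, at most `c` times
the diagonal one. This is the condition under which the identity permutation dominates the Leibniz
expansion of `det A`. -/
def IsMinorDominated {m n R : Type*} [LT m] [LT n] [Ring R] [LinearOrder R]
    (A : Matrix m n R) (c : R) : Prop :=
  ∀ ⦃i i' j j'⦄, i < i' → j < j' → |A i' j| * |A i j'| ≤ c * (|A i' j'| * |A i j|)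

namespace IsMinorDominated

theorem of_forall_covBy_div_le {m n K : Type*} [LT m] [PartialOrder n] [LocallyFiniteOrder n]
    [Field K] [LinearOrder K] [IsStrictOrderedRing K] {A : Matrix m n K} {c : K}
    (hA : ∀ i j, A i j ≠ 0) (hc₀ : 0 ≤ c) (hc₁ : c ≤ 1)
    (hratio : ∀ i i', i < i' → ∀ j j', j ⋖ j' →
      |A i' j| / |A i j| ≤ c * (|A i' j'| / |A i j'|)) :
    IsMinorDominated A c := by
  intro i i' j j' hi hj
  have hpos (l : n) : 0 < |A i l| := abs_pos.2 (hA i l)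
  have hdiv : |A i' j| / |A i j| ≤ c * (|A i' j'| / |A i j'|) :=
    le_mul_of_forall_covBy (f := fun l => |A i' l| / |A i l|) (fun _ => by positivity) hc₀ hc₁
      (hratio i i' hi) hj
  rwa [← mul_div_assoc, div_le_div_iff₀ (hpos j) (hpos j'), mul_assoc] at hdiv

section Ring

variable {ι R : Type*} [Fintype ι] [LinearOrder ι] [CommRing R] [LinearOrder R]
  {A : Matrix ι ι R} {c : R}

theorem prod_abs_perm_le_mul_swap [IsOrderedRing R] (hA : IsMinorDominated A c) {σ : Perm ι}
    {a b : ι} (hab : a < b) (hσ : σ b < σ a) :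
    ∏ x, |A (σ x) x| ≤ c * ∏ x, |A ((σ * swap a b) x) x| := by
  have hrest : ∏ x ∈ {a, b}ᶜ, |A ((σ * swap a b) x) x| = ∏ x ∈ {a, b}ᶜ, |A (σ x) x| :=
    prod_congr rfl fun x hx => by
      obtain ⟨hxa, hxb⟩ : x ≠ a ∧ x ≠ b := by simpa using hx
      rw [Perm.mul_apply, swap_apply_of_ne_of_ne hxa hxb]
  rw [← prod_mul_prod_compl {a, b}, ← prod_mul_prod_compl {a, b} fun x => |A ((σ * _) x) x|,
    hrest, prod_pair hab.ne, prod_pair hab.ne, ← mul_assoc]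
  refine mul_le_mul_of_nonneg_right ?_ (prod_nonneg fun _ _ => abs_nonneg _)
  simpa only [Perm.mul_apply, swap_apply_left, swap_apply_right, mul_comm |A (σ b) a|]
    using hA hσ hab

theorem prod_abs_perm_le [IsStrictOrderedRing R] (hA : IsMinorDominated A c) (hc₀ : 0 ≤ c)
    (hc₁ : c < 1) {σ : Perm ι} (hσ : σ ≠ 1) : ∏ x, |A (σ x) x| ≤ c * ∏ x, |A x x| := by
  obtain ⟨τ, hτ⟩ := Finite.exists_max fun σ : Perm ι => ∏ x, |A (σ x) x|
  have le_mul_max {ρ : Perm ι} (hρ : ρ ≠ 1) : ∏ x, |A (ρ x) x| ≤ c * ∏ x, |A (τ x) x| := by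
    obtain ⟨a, b, hab, hinv⟩ := exists_lt_and_apply_lt_of_ne_one hρ
    exact (hA.prod_abs_perm_le_mul_swap hab hinv).trans (mul_le_mul_of_nonneg_left (hτ _) hc₀)
  obtain rfl | hτ_ne := eq_or_ne τ 1
  · exact le_mul_max hσ
  · have hmax : ∏ x, |A (τ x) x| ≤ 0 := by nlinarith [le_mul_max hτ_ne]
    exact ((hτ σ).trans hmax).trans (mul_nonneg hc₀ (prod_nonneg fun _ _ => abs_nonneg _))

end Ring

end IsMinorDominated

section Leibniz

variable {ι R : Type*} [Fintype ι] [DecidableEq ι] [CommRing R] [LinearOrder R]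
  [IsStrictOrderedRing R]

theorem abs_sign_mul (σ : Perm ι) (x : R) : |((Perm.sign σ : ℤ) : R) * x| = |x| := by
  rw [abs_mul, ← Int.cast_abs, Perm.sign_abs, Int.cast_one, one_mul]

theorem abs_sum_sign_mul_prod_le (A : Matrix ι ι R) (s : Finset (Perm ι)) :
    |∑ σ ∈ s, ((Perm.sign σ : ℤ) : R) * ∏ x, A (σ x) x| ≤ ∑ σ ∈ s, ∏ x, |A (σ x) x| :=
  (abs_sum_le_sum_abs _ _).trans_eq
    (sum_congr rfl fun σ _ => by rw [abs_sign_mul, abs_prod])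

theorem abs_det_le_sum_prod_abs (A : Matrix ι ι R) :
    |A.det| ≤ ∑ σ : Perm ι, ∏ x, |A (σ x) x| := by
  rw [det_apply']
  exact abs_sum_sign_mul_prod_le A univ

theorem abs_det_sub_prod_diag_le_sum_prod_abs (A : Matrix ι ι R) :
    |A.det - ∏ x, A x x| ≤ ∑ σ ∈ univ.erase (1 : Perm ι), ∏ x, |A (σ x) x| := by
  rw [det_apply', ← add_sum_erase _ _ (mem_univ (1 : Perm ι))]
  simpa using abs_sum_sign_mul_prod_le A (univ.erase 1)

end Leibniz

theorem det_updateCol_mulVec {ι R : Type*} [Fintype ι] [DecidableEq ι] [CommRing R]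
    (A : Matrix ι ι R) (v : ι → R) (j : ι) :
    (A.updateCol j (A *ᵥ v)).det = v j * A.det := by
  have hcol : A *ᵥ v = fun i => ∑ l, v l • A i l := by
    ext i
    simp only [mulVec, dotProduct, smul_eq_mul, mul_comm]
  rw [hcol, det_updateCol_sum, smul_eq_mul]

theorem prod_abs_updateCol_perm {ι K : Type*} [Fintype ι] [DecidableEq ι] [Field K] [LinearOrder K]
    [IsStrictOrderedRing K] {A : Matrix ι ι K} {j : ι} (hA : ∀ i, A i j ≠ 0) (b : ι → K)
    (σ : Perm ι) :
    ∏ x, |A.updateCol j b (σ x) x| = |b (σ j)| / |A (σ j) j| * ∏ x, |A (σ x) x| := by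
  have hrest : ∏ x ∈ univ.erase j, |A.updateCol j b (σ x) x| = ∏ x ∈ univ.erase j, |A (σ x) x| :=
    prod_congr rfl fun x hx => by rw [updateCol_ne (ne_of_mem_erase hx)]
  rw [← mul_prod_erase _ _ (mem_univ j), hrest, updateCol_self,
    ← mul_prod_erase _ (fun x => |A (σ x) x|) (mem_univ j), ← mul_assoc,
    div_mul_cancel₀ _ (abs_ne_zero.2 (hA _))]

namespace IsMinorDominated

theorem mul_prod_abs_diag_le_abs_det {ι R : Type*} [Fintype ι] [LinearOrder ι] [CommRing R]
    [LinearOrder R] [IsStrictOrderedRing R] {A : Matrix ι ι R} {c : R}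
    (hA : IsMinorDominated A c) (hc₀ : 0 ≤ c) (hc₁ : c < 1) :
    (1 - ((Fintype.card ι).factorial - 1) * c) * ∏ x, |A x x| ≤ |A.det| := by
  have hoff : |A.det - ∏ x, A x x| ≤ ((Fintype.card ι).factorial - 1) * (c * ∏ x, |A x x|) :=
    calc |A.det - ∏ x, A x x|
        ≤ ∑ σ ∈ univ.erase (1 : Perm ι), ∏ x, |A (σ x) x| := abs_det_sub_prod_diag_le_sum_prod_abs A
      _ ≤ #(univ.erase (1 : Perm ι)) • (c * ∏ x, |A x x|) :=
          sum_le_card_nsmul _ _ _ fun σ hσ => hA.prod_abs_perm_le hc₀ hc₁ (ne_of_mem_erase hσ)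
      _ = ((Fintype.card ι).factorial - 1) * (c * ∏ x, |A x x|) := by
          rw [nsmul_eq_mul, cast_card_erase_of_mem (mem_univ _), card_univ, Fintype.card_perm]
  have hdiag : ∏ x, |A x x| - |A.det| ≤ |A.det - ∏ x, A x x| := by
    rw [abs_sub_comm, ← abs_prod]
    exact abs_sub_abs_le_abs_sub _ _
  linarith

section Field

variable {ι K : Type*} [Fintype ι] [LinearOrder ι] [Field K] [LinearOrder K]
  [IsStrictOrderedRing K] {A : Matrix ι ι K} {c : K}

theorem abs_det_updateCol_le (hA : IsMinorDominated A c) (hc₀ : 0 ≤ c) (hc₁ : c < 1) {j : ι}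
    (hne : ∀ i, A i j ≠ 0) (b : ι → K) :
    |(A.updateCol j b).det| ≤
      (1 + c * (Fintype.card ι - 1).factorial) * (∑ i, |b i| / |A i j|) * ∏ x, |A x x| := by
  set t : ι → K := fun i => |b i| / |A i j|
  set P := ∏ x, |A x x|
  have ht (i : ι) : 0 ≤ t i := by positivity
  have hP : 0 ≤ P := prod_nonneg fun _ _ => abs_nonneg _
  have hterm (σ : Perm ι) :
      t (σ j) * ∏ x, |A (σ x) x| ≤ (if σ = 1 then t j * P else 0) + t (σ j) * (c * P) := by
    split_ifs with hσ
    · subst hσ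
      exact le_add_of_nonneg_right (mul_nonneg (ht _) (mul_nonneg hc₀ hP))
    · rw [zero_add]
      exact mul_le_mul_of_nonneg_left (hA.prod_abs_perm_le hc₀ hc₁ hσ) (ht _)
  calc |(A.updateCol j b).det|
      ≤ ∑ σ : Perm ι, ∏ x, |A.updateCol j b (σ x) x| := abs_det_le_sum_prod_abs _
    _ = ∑ σ : Perm ι, t (σ j) * ∏ x, |A (σ x) x| :=
        sum_congr rfl fun σ _ => prod_abs_updateCol_perm hne b σ
    _ ≤ ∑ σ : Perm ι, ((if σ = 1 then t j * P else 0) + t (σ j) * (c * P)) :=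
        sum_le_sum fun σ _ => hterm σ
    _ = t j * P + ((Fintype.card ι - 1).factorial * ∑ i, t i) * (c * P) := by
        rw [sum_add_distrib, ← sum_mul, sum_perm_apply t j, Fintype.sum_ite_eq', nsmul_eq_mul]
    _ ≤ (∑ i, t i) * P + ((Fintype.card ι - 1).factorial * ∑ i, t i) * (c * P) := by
        gcongr
        exact single_le_sum (fun i _ => ht i) (mem_univ j)
    _ = (1 + c * (Fintype.card ι - 1).factorial) * (∑ i, t i) * P := by ring

theorem mul_abs_le_mul_sum_abs_mulVec_div (hA : IsMinorDominated A c) (hc₀ : 0 ≤ c) (hc₁ : c < 1)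
    (hne : ∀ i j, A i j ≠ 0) (v : ι → K) (j : ι) :
    (1 - ((Fintype.card ι).factorial - 1) * c) * |v j| ≤
      (1 + c * (Fintype.card ι - 1).factorial) * ∑ i, |(A *ᵥ v) i| / |A i j| := by
  have hP : 0 < ∏ x, |A x x| := prod_pos fun x _ => abs_pos.2 (hne x x)
  refine le_of_mul_le_mul_right ?_ hP
  calc (1 - ((Fintype.card ι).factorial - 1) * c) * |v j| * ∏ x, |A x x|
      = |v j| * ((1 - ((Fintype.card ι).factorial - 1) * c) * ∏ x, |A x x|) := by ring
    _ ≤ |v j| * |A.det| :=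
        mul_le_mul_of_nonneg_left (hA.mul_prod_abs_diag_le_abs_det hc₀ hc₁) (abs_nonneg _)
    _ = |(A.updateCol j (A *ᵥ v)).det| := by rw [det_updateCol_mulVec, abs_mul]
    _ ≤ _ := hA.abs_det_updateCol_le hc₀ hc₁ (hne · j) _

end Field

end IsMinorDominated

section Constant

variable (K : Type*) [Field K] [LinearOrder K] [IsStrictOrderedRing K] {k : ℕ}

theorem one_div_factorial_succ_lt_one (hk : 0 < k) : 1 / ((k + 1).factorial : K) < 1 := by
  rw [div_lt_one (by positivity)]
  exact_mod_cast Nat.one_lt_factorial.2 (by omega)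

theorem sub_factorial_div_factorial_succ_pos (hk : 0 < k) :
    0 < 1 - ((k.factorial : K) - 1) * (1 / ((k + 1).factorial : K)) := by
  have hlt : (k.factorial : K) < (k + 1).factorial := by
    exact_mod_cast (Nat.factorial_lt hk).2 k.lt_succ_self
  have hpos : (0 : K) < (k + 1).factorial := by positivity
  rw [sub_pos, mul_one_div, div_lt_one hpos]
  linarith

theorem one_add_factorial_div_factorial_succ_le (hk : 0 < k) :
    1 + 1 / ((k + 1).factorial : K) * (k - 1).factorial ≤
      (1 + 1 / (k : K) + 1 / (k : K) ^ 2) *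
        (1 - ((k.factorial : K) - 1) * (1 / ((k + 1).factorial : K))) := by
  have hk' : (0 : K) < k := by exact_mod_cast hk
  have hpred : ((k - 1).factorial : K) = k.factorial / k := by
    rw [eq_div_iff hk'.ne', mul_comm]
    exact_mod_cast Nat.mul_factorial_pred hk.ne'
  calc 1 + 1 / ((k + 1).factorial : K) * (k - 1).factorial
      = (1 + 1 / (k : K) + 1 / (k : K) ^ 2) *
          (1 - (k.factorial : K) * (1 / ((k + 1).factorial : K))) := by
        rw [hpred, Nat.factorial_succ]
        push_cast
        field_simp
        ring
    _ ≤ _ := by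
        gcongr
        exact sub_le_self _ zero_le_one

end Constant

theorem IsMinorDominated.abs_le_mul_sum_abs_mulVec_div {K : Type*} [Field K] [LinearOrder K]
    [IsStrictOrderedRing K] {k : ℕ} {A : Matrix (Fin k) (Fin k) K}
    (hA : IsMinorDominated A (1 / ((k + 1).factorial : K))) (hne : ∀ i j, A i j ≠ 0) (v : Fin k → K)
    (j : Fin k) :
    |v j| ≤ (1 + 1 / (k : K) + 1 / (k : K) ^ 2) * ∑ i, |(A *ᵥ v) i| / |A i j| := by
  have hk : 0 < k := j.pos
  have hbound := hA.mul_abs_le_mul_sum_abs_mulVec_div (by positivity)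
    (one_div_factorial_succ_lt_one K hk) hne v j
  rw [Fintype.card_fin] at hbound
  have hconst := mul_le_mul_of_nonneg_right (one_add_factorial_div_factorial_succ_le K hk)
    (sum_nonneg fun i _ => by positivity : 0 ≤ ∑ i, |(A *ᵥ v) i| / |A i j|)
  refine le_of_mul_le_mul_left ?_ (sub_factorial_div_factorial_succ_pos K hk)
  linarith

theorem stmt16_general {K V : Type*} [Field K] [LinearOrder K] [IsStrictOrderedRing K]
    [AddCommGroup V] [Module K V] {k : ℕ} (e : Fin k → V) (L : ℕ → V →ₗ[K] K) (n₀ : ℕ)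
    (hne : ∀ j n, n₀ ≤ n → L n (e j) ≠ 0) (φ : ℕ → ℕ) (hφ : ∀ n, n₀ ≤ n → n ≤ φ n)
    (hratio : ∀ i j : Fin k, i ⋖ j → ∀ n, n₀ ≤ n → ∀ n', φ n ≤ n' →
      |L n' (e i)| / |L n (e i)| ≤ 1 / ((k + 1).factorial : K) * (|L n' (e j)| / |L n (e j)|))
    (lam : Fin k → K) (n : ℕ) (hn : n₀ ≤ n) (j : Fin k) :
    |lam j| ≤ (1 + 1 / (k : K) + 1 / (k : K) ^ 2) *
      ∑ i : Fin k, |L (φ^[i] n) (∑ j', lam j' • e j')| / |L (φ^[i] n) (e j)| := by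
  let A : Matrix (Fin k) (Fin k) K := Matrix.of fun i j => L (φ^[i] n) (e j)
  have hge (i : ℕ) : n₀ ≤ φ^[i] n := le_iterate_of_forall_le_apply hφ hn i
  have hstep {i i' : ℕ} (hi : i < i') : φ (φ^[i] n) ≤ φ^[i'] n := by
    rw [← Function.iterate_succ_apply' φ]
    exact monotone_iterate_of_forall_le_apply hφ hn hi
  have hA_ne (i j : Fin k) : A i j ≠ 0 := hne j _ (hge i)
  have hA : IsMinorDominated A (1 / ((k + 1).factorial : K)) :=
    .of_forall_covBy_div_le hA_ne (by positivity) (one_div_factorial_succ_lt_one K j.pos).le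
      fun i i' hi j j' hj => hratio j j' hj _ (hge i) _ (hstep hi)
  have hmulVec (i : Fin k) : (A *ᵥ lam) i = L (φ^[i] n) (∑ j', lam j' • e j') := by
    simp only [A, mulVec, dotProduct, of_apply, map_sum, map_smul, smul_eq_mul, mul_comm]
  simpa only [hmulVec, A, of_apply] using hA.abs_le_mul_sum_abs_mulVec_div hA_ne lam j

/-- Under hypotheses (P): for all real λ_1,…,λ_k, with M = λ_1e_1+…+λ_ke_k, for every
n ≥ n_0 and every j, |λ_j| ≤ (1+1/k+1/k²) · Σ_{i=1}^k |L_{φ^{i-1}(n)}(M)|/|L_{φ^{i-1}(n)}(e_j)|. -/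
theorem stmt16
    (k p : ℕ) (hk : 0 < k) (hkp : k < p)
    (e : Fin k → (Fin p → ℝ))
    (L : ℕ → ((Fin p → ℝ) →ₗ[ℝ] ℝ))
    (n0 : ℕ) (hn0 : 1 ≤ n0)
    (hne : ∀ j : Fin k, ∀ n : ℕ, n0 ≤ n → |L n (e j)| ≠ 0)
    (φ : ℕ → ℕ) (hφ : ∀ n : ℕ, 1 ≤ n → n + 1 ≤ φ n)
    (hcomp : ∀ (i : ℕ) (hi : i + 1 < k), ∀ n : ℕ, n0 ≤ n → ∀ n' : ℕ, φ n ≤ n' →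
      |L n' (e ⟨i, by omega⟩)| / |L n (e ⟨i, by omega⟩)| ≤
        (1 / ((k + 1).factorial : ℝ)) *
          (|L n' (e ⟨i + 1, hi⟩)| / |L n (e ⟨i + 1, hi⟩)|))
    :
    ∀ lam : Fin k → ℝ, ∀ n : ℕ, n0 ≤ n → ∀ j : Fin k,
      |lam j| ≤ (1 + 1 / (k : ℝ) + 1 / (k : ℝ) ^ 2) *
        ∑ i : Fin k,
          |L (φ^[(i : ℕ)] n) (∑ j' : Fin k, lam j' • e j')| /
            |L (φ^[(i : ℕ)] n) (e j)| := by
  refine stmt16_general e L n0 (fun j n hn => abs_ne_zero.1 (hne j n hn)) φ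
    (fun n hn => (Nat.le_succ n).trans (hφ n (hn0.trans hn))) ?_
  rintro ⟨i, _⟩ ⟨_, hi⟩ hij
  obtain rfl := Nat.covBy_iff_add_one_eq.1 (Fin.covBy_iff.1 hij)
  exact hcomp i hi
end

section
/- Assume hypotheses (P). Then for every permutation σ of {1,…,k} and every n ≥ n_0 one has Π_{j=1}^{k} ε_{j, φ^{σ(j)−1}(n)} ≤ η_σ · Π_{j=1}^{k} ε_{j, φ^{j−1}(n)}, where η_σ = 1/(k+1)! if σ is not the identity and η_σ = 1 if σ is the identity, and φ^{m} denotes the m-fold iterate of φ. -/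
open Classical

/-!
If `σ ≠ 1`, its least moved point `i` satisfies `i < σ i` and `i < j := σ⁻¹ i`. Exchanging the
values `σ i` and `σ j = i` makes `i` a fixed point, so it lowers the number of moved points, and
the comparison of the ratios `ε i n' / ε i n` and `ε j n' / ε j n` shows that the product
`∏ x, ε x (φ^[σ x] n)` before the exchange is at most `c = 1 / (k + 1)!` times the product after
it. Repeating this leads to the identity; every exchange contributes a factor `c ≤ 1`, and at least
one is made.
-/

section Exchange

variable {ι κ R : Type*} [CommSemiring R] [PartialOrder R]

/-- The multiplicative Monge condition with constant `c`: uncrossing a pair of entries of the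
array `a` dominates it up to the factor `c`. For `c = 1` it says that all `2 × 2` minors of `a`
are nonnegative. -/
def IsMulMonge [LT ι] [LT κ] (c : R) (a : ι → κ → R) : Prop :=
  ∀ ⦃i j⦄, i < j → ∀ ⦃l m⦄, l < m → a i m * a j l ≤ c * (a i l * a j m)

theorem IsMulMonge.mono [IsOrderedRing R] [LT ι] [LT κ] {a : ι → κ → R} {c c' : R}
    (ha : ∀ i l, 0 ≤ a i l) (hcc' : c ≤ c') (h : IsMulMonge c a) : IsMulMonge c' a :=
  fun _ _ hij _ _ hlm =>
    (h hij hlm).trans (mul_le_mul_of_nonneg_right hcc' (mul_nonneg (ha _ _) (ha _ _)))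

theorem exists_lt_perm_apply_and_lt_perm_symm_apply [LinearOrder ι] [WellFoundedLT ι]
    {σ : Equiv.Perm ι} (hσ : σ ≠ 1) : ∃ i, i < σ i ∧ i < σ.symm i := by
  obtain ⟨i, hi, hmin⟩ := wellFounded_lt.has_min {x | σ x ≠ x}
    (not_forall.1 fun h => hσ (Equiv.ext h))
  have fixed_of_lt : ∀ x < i, σ x = x := fun x hx => by_contra fun h => hmin x h hx
  refine ⟨i, lt_of_not_ge fun hle => ?_, lt_of_not_ge fun hle => ?_⟩
  · exact hi (σ.injective (fixed_of_lt _ (hle.lt_of_ne hi)))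
  · have hne : σ.symm i ≠ i := fun h => hi (σ.symm_apply_eq.1 h).symm
    exact hne ((fixed_of_lt _ (hle.lt_of_ne hne)).symm.trans (σ.apply_symm_apply i))

variable [IsOrderedRing R] [Fintype ι] {a : ι → κ → R} {c : R}

theorem prod_le_mul_prod_comp_swap [DecidableEq ι] (ha : ∀ x y, 0 ≤ a x y) (f : ι → κ) {i j : ι}
    (hij : i ≠ j) (h : a i (f i) * a j (f j) ≤ c * (a i (f j) * a j (f i))) :
    ∏ x, a x (f x) ≤ c * ∏ x, a x (f (Equiv.swap i j x)) := by
  have hrest : ∏ x ∈ {i, j}ᶜ, a x (f (Equiv.swap i j x)) = ∏ x ∈ {i, j}ᶜ, a x (f x) := by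
    refine Finset.prod_congr rfl fun x hx => ?_
    obtain ⟨hxi, hxj⟩ : x ≠ i ∧ x ≠ j := by simpa using hx
    rw [Equiv.swap_apply_of_ne_of_ne hxi hxj]
  calc ∏ x, a x (f x) = (a i (f i) * a j (f j)) * ∏ x ∈ {i, j}ᶜ, a x (f x) := by
        rw [← Finset.prod_mul_prod_compl {i, j}, Finset.prod_pair hij]
    _ ≤ c * (a i (f j) * a j (f i)) * ∏ x ∈ {i, j}ᶜ, a x (f x) :=
        mul_le_mul_of_nonneg_right h (Finset.prod_nonneg fun x _ => ha x _)
    _ = c * ∏ x, a x (f (Equiv.swap i j x)) := by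
        rw [← Finset.prod_mul_prod_compl {i, j}, Finset.prod_pair hij, hrest,
          Equiv.swap_apply_left, Equiv.swap_apply_right, mul_assoc]

end Exchange

namespace IsMulMonge

variable {ι R : Type*} [Fintype ι] [LinearOrder ι] [CommSemiring R] [PartialOrder R]
  [IsOrderedRing R] {a : ι → ι → R} {c : R}

theorem exists_perm_card_support_lt (ha : ∀ i l, 0 ≤ a i l) (h : IsMulMonge c a)
    {σ : Equiv.Perm ι} (hσ : σ ≠ 1) :
    ∃ τ : Equiv.Perm ι, τ.support.card < σ.support.card ∧
      ∏ x, a x (σ x) ≤ c * ∏ x, a x (τ x) := by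
  obtain ⟨i, hiσ, hij⟩ := exists_lt_perm_apply_and_lt_perm_symm_apply hσ
  refine ⟨σ * Equiv.swap i (σ.symm i), ?_, prod_le_mul_prod_comp_swap ha σ hij.ne ?_⟩
  · rw [Equiv.mul_swap_eq_swap_mul, σ.apply_symm_apply, Equiv.swap_comm]
    exact Equiv.Perm.card_support_swap_mul hiσ.ne'
  · rw [σ.apply_symm_apply]
    exact h hij hiσ

theorem prod_perm_le_prod_diag (ha : ∀ i l, 0 ≤ a i l) (h : IsMulMonge 1 a) (σ : Equiv.Perm ι) :
    ∏ x, a x (σ x) ≤ ∏ x, a x x := by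
  induction hN : σ.support.card using Nat.strong_induction_on generalizing σ with
  | _ N ih =>
    obtain rfl | hσ := eq_or_ne σ 1
    · rfl
    · obtain ⟨τ, hcard, hle⟩ := h.exists_perm_card_support_lt ha hσ
      rw [one_mul] at hle
      exact hle.trans (ih _ (hN ▸ hcard) τ rfl)

theorem prod_perm_le_mul_prod_diag (ha : ∀ i l, 0 ≤ a i l) (hc₀ : 0 ≤ c) (hc₁ : c ≤ 1)
    (h : IsMulMonge c a) {σ : Equiv.Perm ι} (hσ : σ ≠ 1) :
    ∏ x, a x (σ x) ≤ c * ∏ x, a x x := by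
  obtain ⟨τ, -, hle⟩ := h.exists_perm_card_support_lt ha hσ
  exact hle.trans (mul_le_mul_of_nonneg_left ((h.mono ha hc₁).prod_perm_le_prod_diag ha τ) hc₀)

end IsMulMonge

section Ratios

variable {ι κ 𝕜 : Type*} [PartialOrder ι] [LocallyFiniteOrder ι]

theorem le_mul_of_lt_of_forall_covBy [Semiring 𝕜] [PartialOrder 𝕜] [IsOrderedRing 𝕜]
    {g : ι → 𝕜} {c : 𝕜} (hg : ∀ i, 0 ≤ g i) (hc₀ : 0 ≤ c) (hc₁ : c ≤ 1)
    (h : ∀ i j, i ⋖ j → g i ≤ c * g j) {i j : ι} (hij : i < j) : g i ≤ c * g j := by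
  have hmono : Monotone g := (monotone_iff_forall_covBy g).2 fun i j hij =>
    (h i j hij).trans (mul_le_of_le_one_left (hg j) hc₁)
  obtain ⟨i', hii', hi'j⟩ := exists_covBy_le_of_lt hij
  exact (h i i' hii').trans (mul_le_mul_of_nonneg_left (hmono hi'j) hc₀)

theorem isMulMonge_of_forall_covBy_div_le [LT κ] [Field 𝕜] [LinearOrder 𝕜]
    [IsStrictOrderedRing 𝕜] {a : ι → κ → 𝕜} {c : 𝕜} (ha : ∀ i l, 0 < a i l)
    (hc₀ : 0 ≤ c) (hc₁ : c ≤ 1)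
    (h : ∀ i j, i ⋖ j → ∀ l m, l < m → a i m / a i l ≤ c * (a j m / a j l)) :
    IsMulMonge c a := by
  intro i j hij l m hlm
  have hratio : a i m / a i l ≤ c * (a j m / a j l) :=
    le_mul_of_lt_of_forall_covBy (g := fun i => a i m / a i l)
      (fun i => (div_pos (ha i m) (ha i l)).le) hc₀ hc₁ (fun i j hij => h i j hij l m hlm) hij
  rw [← mul_div_assoc, div_le_div_iff₀ (ha i l) (ha j l)] at hratio
  exact hratio.trans_eq (by ring)

end Ratios

section Iterates

variable {T : Type*} [Preorder T] {φ : T → T} {t₀ t : T}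

theorem le_iterate_of_forall_ge (hφ : ∀ s, t₀ ≤ s → s ≤ φ s) (ht : t₀ ≤ t) (m : ℕ) :
    t₀ ≤ φ^[m] t :=
  Set.MapsTo.iterate (s := Set.Ici t₀) (fun s hs => le_trans hs (hφ s hs)) m ht

theorem monotone_iterate_of_forall_ge (hφ : ∀ s, t₀ ≤ s → s ≤ φ s) (ht : t₀ ≤ t) :
    Monotone fun m => φ^[m] t :=
  monotone_nat_of_le_succ fun m => by
    rw [Function.iterate_succ_apply']
    exact hφ _ (le_iterate_of_forall_ge hφ ht m)

end Iterates

theorem stmt17_general {k : ℕ} {T 𝕜 : Type*} [Preorder T] [Field 𝕜] [LinearOrder 𝕜]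
    [IsStrictOrderedRing 𝕜] (ε : Fin k → T → 𝕜) (t₀ : T) (hε : ∀ j t, t₀ ≤ t → 0 < ε j t)
    (φ : T → T) (hφ : ∀ t, t₀ ≤ t → t ≤ φ t) {c : 𝕜} (hc₀ : 0 ≤ c) (hc₁ : c ≤ 1)
    (hratio : ∀ (i : ℕ) (hi : i + 1 < k), ∀ t, t₀ ≤ t → ∀ t', φ t ≤ t' →
      ε ⟨i, by omega⟩ t' / ε ⟨i, by omega⟩ t ≤ c * (ε ⟨i + 1, hi⟩ t' / ε ⟨i + 1, hi⟩ t))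
    (σ : Equiv.Perm (Fin k)) (t : T) (ht : t₀ ≤ t) :
    ∏ j, ε j (φ^[(σ j : ℕ)] t) ≤
      (if σ = Equiv.refl (Fin k) then 1 else c) * ∏ j, ε j (φ^[(j : ℕ)] t) := by
  have hpos : ∀ (j l : Fin k), 0 < ε j (φ^[(l : ℕ)] t) := fun j l =>
    hε j _ (le_iterate_of_forall_ge hφ ht l)
  have hmonge : IsMulMonge c fun j l : Fin k => ε j (φ^[(l : ℕ)] t) := by
    refine isMulMonge_of_forall_covBy_div_le hpos hc₀ hc₁ fun i ⟨j, hj⟩ hij l m hlm => ?_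
    have hstep : φ (φ^[(l : ℕ)] t) ≤ φ^[(m : ℕ)] t := by
      rw [← Function.iterate_succ_apply' φ]
      exact monotone_iterate_of_forall_ge hφ ht (Nat.succ_le_of_lt hlm)
    obtain rfl : (i : ℕ) + 1 = j := Order.covBy_iff_add_one_eq.1 (Fin.covBy_iff.1 hij)
    exact hratio i _ _ (le_iterate_of_forall_ge hφ ht l) _ hstep
  split_ifs with hσ
  · simp only [hσ, Equiv.refl_apply, one_mul, le_refl]
  · exact hmonge.prod_perm_le_mul_prod_diag (fun j l => (hpos j l).le) hc₀ hc₁ hσ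

/-- Under hypotheses (P): for every permutation σ of {1,…,k} and n ≥ n_0,
Π_j ε_{j,φ^{σ(j)-1}(n)} ≤ η_σ Π_j ε_{j,φ^{j-1}(n)}, with η_σ = 1/(k+1)! for σ ≠ id,
η_id = 1. -/
theorem stmt17
    (k p : ℕ) (hk : 0 < k) (hkp : k < p)
    (e : Fin k → (Fin p → ℝ))
    (L : ℕ → ((Fin p → ℝ) →ₗ[ℝ] ℝ))
    (n0 : ℕ) (hn0 : 1 ≤ n0)
    (hne : ∀ j : Fin k, ∀ n : ℕ, n0 ≤ n → |L n (e j)| ≠ 0)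
    (φ : ℕ → ℕ) (hφ : ∀ n : ℕ, 1 ≤ n → n + 1 ≤ φ n)
    (hcomp : ∀ (i : ℕ) (hi : i + 1 < k), ∀ n : ℕ, n0 ≤ n → ∀ n' : ℕ, φ n ≤ n' →
      |L n' (e ⟨i, by omega⟩)| / |L n (e ⟨i, by omega⟩)| ≤
        (1 / ((k + 1).factorial : ℝ)) *
          (|L n' (e ⟨i + 1, hi⟩)| / |L n (e ⟨i + 1, hi⟩)|))
    :
    ∀ σ : Equiv.Perm (Fin k), ∀ n : ℕ, n0 ≤ n →
      ∏ j : Fin k, |L (φ^[((σ j : Fin k) : ℕ)] n) (e j)| ≤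
        (if σ = Equiv.refl (Fin k) then (1 : ℝ) else 1 / ((k + 1).factorial : ℝ)) *
          ∏ j : Fin k, |L (φ^[(j : ℕ)] n) (e j)| :=
  stmt17_general (fun j n => |L n (e j)|) n0 (fun j n hn => abs_pos.2 (abs_ne_zero.1 (hne j n hn)))
    φ (fun n hn => (Nat.le_succ n).trans (hφ n (hn0.trans hn))) (by positivity)
    (div_le_self zero_le_one (mod_cast (k + 1).factorial_pos)) hcomp
end

section
/- Let a be an odd integer, and let r, n be positive integers with 6r ≤ a. Then 0 < S_n ≤ (2^{6(r+1)}/r^{2(a−6r)})^n · Σ_{k=2rn+1}^{∞} 1/k^a. -/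
open scoped BigOperators

/-- Real Pochhammer product: (x)_m = x(x+1)⋯(x+m−1). -/
noncomputable def poch (x : ℝ) (m : ℕ) : ℝ := ∏ j ∈ Finset.range m, (x + j)

/-- The rational function of t appearing in the series defining S_n. -/
noncomputable def Sfun (a r n : ℕ) : ℝ → ℝ := fun t =>
  (poch (t - ((2 * r + 1) * n : ℕ)) (2 * r * n)) ^ 3 *
    (poch (t + (n : ℕ) + 1) (2 * r * n)) ^ 3 /
      (poch (t - (n : ℕ)) (2 * n + 1)) ^ a

/-- S_n = (2n)!^{a−6r} Σ_{t=n+1}^∞ (t−(2r+1)n)_{2rn}³ (t+n+1)_{2rn}³ / (t−n)_{2n+1}^a. -/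
noncomputable def S (a r n : ℕ) : ℝ :=
  ((2 * n).factorial : ℝ) ^ (a - 6 * r) * ∑' m : ℕ, Sfun a r n ((n : ℝ) + 1 + m)

/-!
Put `k = t - n`: the terms with `1 ≤ k ≤ 2rn` vanish, since there `(k - 2rn)_{2rn}` contains the
factor `0`. For `k > 2rn` the terms are compared one at a time with `1 / k ^ a`. Write
`(k)_{2n+1} = k E` with `E = (k + 1)_{2n}`. Pairing the factors of `(k - 2rn)_{2rn}` and
`(k + 2n + 1)_{2rn}` that lie symmetrically about `k + n` bounds each pair by `k (k + 2n)`, and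
pairing the factors of `E` in the same way bounds each pair below by `k (k + 2n)`. Hence the product
of the two numerator symbols is at most `E ^ (2r)`, and its cube cancels `6r` of the `a` factors `E`
in the denominator. Each of the remaining `a - 6r` factors is at least `r ^ (2n) (2n)!`, because
`r (j + 1) ≤ 2rn < k`.
-/

section Pochhammer

variable {x y c : ℝ} {m k : ℕ}

lemma poch_eq_eval_ascPochhammer (x : ℝ) (m : ℕ) : poch x m = (ascPochhammer ℝ m).eval x := by
  induction m with
  | zero => simp [poch]
  | succ m ih => rw [ascPochhammer_succ_eval, ← ih, poch, Finset.prod_range_succ, poch]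

lemma poch_pos (hx : 0 < x) (m : ℕ) : 0 < poch x m :=
  poch_eq_eval_ascPochhammer x m ▸ ascPochhammer_pos m x hx

lemma poch_neg_natCast_eq_zero (h : k < m) : poch (-k) m = 0 :=
  poch_eq_eval_ascPochhammer (-k) m ▸ ascPochhammer_eval_neg_coe_nat_of_lt h

lemma poch_succ_left (x : ℝ) (m : ℕ) : poch x (m + 1) = x * poch (x + 1) m := by
  simp [poch_eq_eval_ascPochhammer, ascPochhammer_succ_left]

lemma poch_eq_prod_sub (x : ℝ) (m : ℕ) :
    poch x m = ∏ j ∈ Finset.range m, (x + m - 1 - j) := by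
  rw [← descPochhammer_eval_eq_prod_range, descPochhammer_eval_eq_ascPochhammer,
    poch_eq_eval_ascPochhammer]
  congr 1
  ring

lemma poch_sub_mul_poch_add_le (hx : m ≤ x) (hy : -1 ≤ y) :
    poch (x - m) m * poch (x + y + 1) m ≤ (x * (x + y)) ^ m := by
  calc poch (x - m) m * poch (x + y + 1) m
      = ∏ j ∈ Finset.range m, (x - m + m - 1 - j) * (x + y + 1 + j) := by
        rw [poch_eq_prod_sub, poch, Finset.prod_mul_distrib]
    _ ≤ ∏ _j ∈ Finset.range m, x * (x + y) := by
        refine Finset.prod_le_prod (fun j hj ↦ ?_) fun j _ ↦ ?_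
        · have hj : ((j + 1 : ℕ) : ℝ) ≤ m := Nat.cast_le.mpr (Finset.mem_range.mp hj)
          push_cast at hj
          exact mul_nonneg (by linarith) (by linarith)
        · have : 0 ≤ (1 + (j : ℝ)) * (y + 1 + j) := mul_nonneg (by positivity) (by linarith)
          linarith
    _ = (x * (x + y)) ^ m := by rw [Finset.prod_const, Finset.card_range]

lemma mul_pow_le_poch_sq (hx : 0 ≤ x) (m : ℕ) : (x * (x + m)) ^ m ≤ poch (x + 1) m ^ 2 := by
  calc (x * (x + m)) ^ m = ∏ _j ∈ Finset.range m, x * (x + m) := by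
        rw [Finset.prod_const, Finset.card_range]
    _ ≤ ∏ j ∈ Finset.range m, (x + 1 + j) * (x + 1 + m - 1 - j) := by
        refine Finset.prod_le_prod (fun j _ ↦ by positivity) fun j hj ↦ ?_
        have hj : (j : ℝ) ≤ m := Nat.cast_le.mpr (Finset.mem_range.mp hj).le
        have : 0 ≤ (1 + (j : ℝ)) * (m - j) := mul_nonneg (by positivity) (sub_nonneg.mpr hj)
        linarith
    _ = poch (x + 1) m ^ 2 := by rw [Finset.prod_mul_distrib, ← poch, ← poch_eq_prod_sub, sq]

lemma pow_mul_factorial_le_poch (hc : 0 ≤ c) (hx : c * m ≤ x) :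
    c ^ m * m.factorial ≤ poch (x + 1) m := by
  calc c ^ m * m.factorial = ∏ j ∈ Finset.range m, c * ((j + 1 : ℕ) : ℝ) := by
        rw [Finset.prod_mul_distrib, Finset.prod_const, Finset.card_range,
          ← Nat.cast_prod, Finset.prod_range_add_one_eq_factorial]
    _ ≤ poch (x + 1) m := by
        refine Finset.prod_le_prod (fun j _ ↦ by positivity) fun j hj ↦ ?_
        have hj : ((j + 1 : ℕ) : ℝ) ≤ m := Nat.cast_le.mpr (Finset.mem_range.mp hj)
        linarith [mul_le_mul_of_nonneg_left hj hc, j.cast_nonneg (α := ℝ)]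

lemma poch_sub_mul_poch_add_le_poch_pow (r m : ℕ) (hx : (m * r : ℕ) ≤ x) :
    poch (x - (m * r : ℕ)) (m * r) * poch (x + m + 1) (m * r) ≤ poch (x + 1) m ^ (2 * r) := by
  have hx0 : 0 ≤ x := (Nat.cast_nonneg _).trans hx
  calc poch (x - (m * r : ℕ)) (m * r) * poch (x + m + 1) (m * r)
      ≤ (x * (x + m)) ^ (m * r) :=
        poch_sub_mul_poch_add_le hx (by linarith [m.cast_nonneg (α := ℝ)])
    _ = ((x * (x + m)) ^ m) ^ r := pow_mul _ _ _
    _ ≤ (poch (x + 1) m ^ 2) ^ r := by gcongr; exact mul_pow_le_poch_sq hx0 m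
    _ = poch (x + 1) m ^ (2 * r) := (pow_mul _ _ _).symm

end Pochhammer

section Summand

variable {a r n : ℕ} {x : ℝ}

lemma Sfun_add_natCast (a r n : ℕ) (x : ℝ) :
    Sfun a r n (x + n) = (poch (x - (2 * n * r : ℕ)) (2 * n * r) *
      poch (x + (2 * n : ℕ) + 1) (2 * n * r)) ^ 3 / poch x (2 * n + 1) ^ a := by
  have hlow : x + n - ((2 * r + 1) * n : ℕ) = x - (2 * n * r : ℕ) := by
    push_cast
    ring
  have hhigh : x + n + n + 1 = x + (2 * n : ℕ) + 1 := by
    push_cast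
    ring
  rw [Sfun, hlow, hhigh, add_sub_cancel_right, mul_right_comm 2 r n, mul_pow]

lemma Sfun_natCast_add_eq_zero {k : ℕ} (hk : 0 < k) (hkr : k ≤ 2 * n * r) :
    Sfun a r n (k + n) = 0 := by
  have hcast : (k : ℝ) - (2 * n * r : ℕ) = -(2 * n * r - k : ℕ) := by
    rw [Nat.cast_sub hkr, neg_sub]
  rw [Sfun_add_natCast, hcast, poch_neg_natCast_eq_zero (by omega)]
  simp

lemma Sfun_pos (hx : (2 * n * r : ℕ) < x) : 0 < Sfun a r n (x + n) := by
  have hx0 : 0 < x := (Nat.cast_nonneg _).trans_lt hx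
  have hlow := poch_pos (sub_pos.mpr hx) (2 * n * r)
  have hhigh := poch_pos (by positivity : 0 < x + (2 * n : ℕ) + 1) (2 * n * r)
  have hden := poch_pos hx0 (2 * n + 1)
  rw [Sfun_add_natCast]
  positivity

lemma factorial_pow_mul_Sfun_le (hr : 1 ≤ r) (hra : 6 * r ≤ a) (hx : (2 * n * r : ℕ) < x) :
    ((2 * n).factorial : ℝ) ^ (a - 6 * r) * Sfun a r n (x + n) ≤
      (1 / (r : ℝ) ^ (2 * (a - 6 * r))) ^ n * (1 / x ^ a) := by
  have hx0 : 0 < x := (Nat.cast_nonneg _).trans_lt hx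
  have hr0 : (0 : ℝ) < r := Nat.cast_pos.mpr hr
  have hE := poch_pos (by positivity : 0 < x + 1) (2 * n)
  have hnum := poch_sub_mul_poch_add_le_poch_pow r (2 * n) hx.le
  have hfact : ((2 * n).factorial : ℝ) ≤ poch (x + 1) (2 * n) / (r : ℝ) ^ (2 * n) := by
    rw [le_div_iff₀' (by positivity)]
    exact pow_mul_factorial_le_poch hr0.le (by rw [mul_comm]; exact_mod_cast hx.le)
  have hlow := poch_pos (sub_pos.mpr hx) (2 * n * r)
  have hhigh := poch_pos (by positivity : 0 < x + (2 * n : ℕ) + 1) (2 * n * r)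
  obtain ⟨b, rfl⟩ := Nat.exists_eq_add_of_le hra
  rw [Sfun_add_natCast, poch_succ_left, Nat.add_sub_cancel_left]
  set E := poch (x + 1) (2 * n)
  calc _ ≤ (E / (r : ℝ) ^ (2 * n)) ^ b * ((E ^ (2 * r)) ^ 3 / (x * E) ^ (6 * r + b)) := by gcongr
    _ = (1 / (r : ℝ) ^ (2 * b)) ^ n * (1 / x ^ (6 * r + b)) := by
        field_simp
        ring

end Summand

lemma S_eq_tsum (a r n : ℕ) :
    S a r n = ∑' m : ℕ,
      ((2 * n).factorial : ℝ) ^ (a - 6 * r) * Sfun a r n ((2 * n * r + 1 + m : ℕ) + n) := by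
  have hsupport : Function.support (fun m : ℕ ↦ Sfun a r n (n + 1 + m)) ⊆
      Set.range (· + 2 * n * r) := by
    intro m hm
    refine ⟨m - 2 * n * r, Nat.sub_add_cancel (not_lt.mp fun hlt ↦ hm ?_)⟩
    convert Sfun_natCast_add_eq_zero (a := a) m.succ_pos hlt using 2
    push_cast
    ring
  rw [S, tsum_mul_left, ← (add_left_injective (2 * n * r)).tsum_eq hsupport]
  congr! 4
  push_cast
  ring

lemma summable_one_div_natCast_add_pow {p : ℕ} (hp : 1 < p) (N : ℕ) :
    Summable fun m : ℕ ↦ 1 / ((N + m : ℕ) : ℝ) ^ p := by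
  simpa only [add_comm N] using
    (summable_nat_add_iff N).mpr (Real.summable_one_div_nat_pow.mpr hp)

theorem stmt19_general {a r : ℕ} (n : ℕ) (hr : 1 ≤ r) (hra : 6 * r ≤ a) :
    0 < S a r n ∧
      S a r n ≤ (1 / (r : ℝ) ^ (2 * (a - 6 * r))) ^ n *
        ∑' m : ℕ, 1 / ((2 * r * n + 1 + m : ℕ) : ℝ) ^ a := by
  have hlt (m : ℕ) : ((2 * n * r : ℕ) : ℝ) < (2 * n * r + 1 + m : ℕ) :=
    Nat.cast_lt.mpr (by omega)
  have hpos (m : ℕ) : 0 < ((2 * n).factorial : ℝ) ^ (a - 6 * r) *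
      Sfun a r n ((2 * n * r + 1 + m : ℕ) + n) := mul_pos (by positivity) (Sfun_pos (hlt m))
  have hle (m : ℕ) := factorial_pow_mul_Sfun_le hr hra (hlt m)
  have hmajorant := (summable_one_div_natCast_add_pow (p := a) (by omega)
    (2 * n * r + 1)).mul_left ((1 / (r : ℝ) ^ (2 * (a - 6 * r))) ^ n)
  have hsum := hmajorant.of_nonneg_of_le (fun m ↦ (hpos m).le) hle
  rw [S_eq_tsum, mul_right_comm 2 r n, ← tsum_mul_left]
  exact ⟨hsum.tsum_pos (fun m ↦ (hpos m).le) 0 (hpos 0), hsum.tsum_le_tsum hle hmajorant⟩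

/-- For odd a and positive integers r, n with 6r ≤ a:
0 < S_n ≤ (2^{6(r+1)}/r^{2(a−6r)})^n · Σ_{k=2rn+1}^∞ 1/k^a. -/
theorem stmt19 (a r n : ℕ) (ha : Odd a) (hr : 1 ≤ r) (hn : 1 ≤ n) (hra : 6 * r ≤ a) :
    0 < S a r n ∧
      S a r n ≤ ((2 : ℝ) ^ (6 * (r + 1)) / (r : ℝ) ^ (2 * (a - 6 * r))) ^ n *
        ∑' m : ℕ, 1 / ((2 * r * n + 1 + m : ℕ) : ℝ) ^ a := by
  obtain ⟨hpos, hle⟩ := stmt19_general n hr hra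
  exact ⟨hpos, hle.trans (by gcongr; exact one_le_pow₀ one_le_two)⟩
end
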